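/- arXiv:1712.03336 — 2 statements merged into one kernel-verified Lean document; each statement's English description precedes it below -/
import Mathlib

section
/- Suppose the mechanism (p, x) satisfies fraction feasibility (FF), each x_j is integrable, and conditions (i)–(ii) of Lemma 1 hold (each p̃_j is monotone increasing and ṽ_j(t) = ṽ_j(a_j) + θ ∫_{a_j}^{t} p̃_j(τ) dτ for all t ∈ T_j and all j). Then the expected revenue satisfies ER = −∑_{j=1}^n ṽ_j(a_j) + θ ∫_T { ∑_{j=1}^n [ t_j − (1 − F_j(t_j))/f_j(t_j) − h(θ)/θ ] (∑_{i∈S_j} p_i(t)) } f(t) dt − ∫_T [ ∑_{i=1}^m p_i(t) r_i ] f(t) dt. (Lemma 2.) -/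
open MeasureTheory Finset

noncomputable section Caching

/-- The joint type space T = ∏_j [a_j, ā_j]. -/
def Tspace {n : ℕ} (a abar : Fin n → ℝ) : Set (Fin n → ℝ) :=
  Set.univ.pi fun j => Set.Icc (a j) (abar j)

/-- The joint density f(t) = ∏_j f_j(t_j). -/
def jointDens {n : ℕ} (f : Fin n → ℝ → ℝ) (t : Fin n → ℝ) : ℝ :=
  ∏ j, f j (t j)

/-- Interim allocation p̃_j(τ) = ∫_{T_{−j}} (∑_{i∈S_j} p_i(τ, t_{−j})) f_{−j}(t_{−j}) dt_{−j},
written as an integral over the whole type space against the joint density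
(the coordinate j integrates out since f_j is a probability density). -/
def interimAlloc {n m : ℕ} (a abar : Fin n → ℝ) (f : Fin n → ℝ → ℝ)
    (S : Fin n → Finset (Fin m)) (p : (Fin n → ℝ) → Fin m → ℝ)
    (j : Fin n) (τ : ℝ) : ℝ :=
  ∫ t in Tspace a abar, (∑ i ∈ S j, p (Function.update t j τ) i) * jointDens f t

/-- Interim payment x̃_j(τ) = ∫_{T_{−j}} x_j(τ, t_{−j}) f_{−j}(t_{−j}) dt_{−j}. -/
def interimPay {n : ℕ} (a abar : Fin n → ℝ) (f : Fin n → ℝ → ℝ)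
    (x : (Fin n → ℝ) → Fin n → ℝ) (j : Fin n) (τ : ℝ) : ℝ :=
  ∫ t in Tspace a abar, x (Function.update t j τ) j * jointDens f t

/-- Truthful interim utility ṽ_j(t) = θ t p̃_j(t) − x̃_j(t). -/
def vtld {n m : ℕ} (θ : ℝ) (a abar : Fin n → ℝ) (f : Fin n → ℝ → ℝ)
    (S : Fin n → Finset (Fin m)) (p : (Fin n → ℝ) → Fin m → ℝ)
    (x : (Fin n → ℝ) → Fin n → ℝ) (j : Fin n) (t : ℝ) : ℝ :=
  θ * t * interimAlloc a abar f S p j t - interimPay a abar f x j t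

/-!
Draw all types from the joint law and then overwrite the type of user `j` by an independent copy:
the joint law is unchanged, so by Fubini the expected payment of user `j` is the mean of the interim
payment. The envelope formula expresses the interim payment through the interim allocation `Q` as
`-ṽ_j(a_j) + θ (t Q(t) - ∫_{a_j}^t Q)`. Integration by parts turns the mean information rent
`∫ (∫_{a_j}^t Q) f_j` into `∫ Q (1 - F_j)`, which is the mean of `Q` times the inverse hazard rate
`(1 - F_j) / f_j`; what is left is the virtual valuation times `Q`, and Fubini applied backwards
replaces `Q` by the allocation. The delivery cost is distributed over the users by the double
counting `∑_i p_i |Ω_i| = ∑_j ∑_{i ∈ S_j} p_i`.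
-/

section Density

variable {α : Type*} [MeasurableSpace α] {μ : Measure α} {f : α → ℝ}

theorem integral_withDensity_ofReal (hf : AEMeasurable f μ) (hf0 : 0 ≤ᵐ[μ] f) (g : α → ℝ) :
    ∫ x, g x ∂μ.withDensity (fun x => ENNReal.ofReal (f x)) = ∫ x, g x * f x ∂μ := by
  rw [integral_withDensity_eq_integral_toReal_smul₀ hf.ennreal_ofReal (by simp)]
  refine integral_congr_ae (hf0.mono fun x hx => ?_)
  simp only [ENNReal.toReal_ofReal hx, smul_eq_mul, mul_comm]

theorem integrable_withDensity_ofReal_iff (hf : AEMeasurable f μ) (hf0 : 0 ≤ᵐ[μ] f) {g : α → ℝ} :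
    Integrable g (μ.withDensity fun x => ENNReal.ofReal (f x)) ↔
      Integrable (fun x => g x * f x) μ := by
  rw [integrable_withDensity_iff_integrable_smul₀' hf.ennreal_ofReal (by simp)]
  refine integrable_congr (hf0.mono fun x hx => ?_)
  simp only [ENNReal.toReal_ofReal hx, smul_eq_mul, mul_comm]

end Density

theorem preimage_update_univ_pi {ι : Type*} [DecidableEq ι] {X : ι → Type*} (s : ∀ i, Set (X i))
    (j : ι) :
    (fun z : (∀ i, X i) × X j => Function.update z.1 j z.2) ⁻¹' Set.univ.pi s =
      Set.univ.pi (Function.update s j Set.univ) ×ˢ s j := by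
  ext ⟨t, τ⟩
  simp only [Set.mem_preimage, Set.mem_prod, Set.mem_univ_pi]
  rw [Function.forall_update_iff (p := fun i y => y ∈ s i),
    Function.forall_update_iff (p := fun i u => t i ∈ u)]
  simp [and_comm]

section ProductMeasure

variable {ι : Type*} [Fintype ι] {X : ι → Type*} [∀ i, MeasurableSpace (X i)]
  {μ : ∀ i, Measure (X i)}

theorem ae_pi_mem_univ_pi [∀ i, SigmaFinite (μ i)] {s : ∀ i, Set (X i)}
    (hs : ∀ i, ∀ᵐ y ∂μ i, y ∈ s i) : ∀ᵐ t ∂Measure.pi μ, t ∈ Set.univ.pi s := by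
  simpa only [Set.mem_univ_pi] using
    Filter.eventually_all.2 fun i => Measure.tendsto_eval_ae_ae.eventually (hs i)

theorem ae_pi_prod_nonneg [∀ i, SigmaFinite (μ i)] {f : ∀ i, X i → ℝ}
    (hf0 : ∀ i, 0 ≤ᵐ[μ i] f i) : ∀ᵐ t ∂Measure.pi μ, 0 ≤ ∏ i, f i (t i) := by
  filter_upwards [ae_pi_mem_univ_pi (s := fun i => {y | 0 ≤ f i y}) hf0] with t ht
  exact prod_nonneg fun i _ => ht i (Set.mem_univ i)

theorem pi_withDensity_ofReal [∀ i, SigmaFinite (μ i)] {f : ∀ i, X i → ℝ}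
    (hf : ∀ i, Integrable (f i) (μ i)) (hf0 : ∀ i, 0 ≤ᵐ[μ i] f i) :
    Measure.pi (fun i => (μ i).withDensity fun y => ENNReal.ofReal (f i y)) =
      (Measure.pi μ).withDensity fun t => ENNReal.ofReal (∏ i, f i (t i)) := by
  have (i : ι) := isFiniteMeasure_withDensity_ofReal (hf i).hasFiniteIntegral
  refine Measure.pi_eq fun s hs => ?_
  have hfs (i : ι) : Integrable (f i) ((μ i).restrict (s i)) := (hf i).restrict
  have hfs0 (i : ι) : 0 ≤ᵐ[(μ i).restrict (s i)] f i := ae_restrict_of_ae (hf0 i)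
  calc ((Measure.pi μ).withDensity fun t => ENNReal.ofReal (∏ i, f i (t i))) (Set.univ.pi s)
    _ = ∫⁻ t, ENNReal.ofReal (∏ i, f i (t i)) ∂Measure.pi fun i => (μ i).restrict (s i) := by
      rw [withDensity_apply _ (MeasurableSet.univ_pi hs), Measure.restrict_pi_pi]
    _ = ENNReal.ofReal (∏ i, ∫ y in s i, f i y ∂μ i) := by
      rw [← ofReal_integral_eq_lintegral_ofReal (Integrable.fintype_prod_dep hfs)
        (ae_pi_prod_nonneg hfs0), integral_fintype_prod_eq_prod]
    _ = ∏ i, ((μ i).withDensity fun y => ENNReal.ofReal (f i y)) (s i) := by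
      rw [ENNReal.ofReal_prod_of_nonneg fun i _ => integral_nonneg_of_ae (hfs0 i)]
      refine prod_congr rfl fun i _ => ?_
      rw [withDensity_apply _ (hs i), ofReal_integral_eq_lintegral_ofReal (hfs i) (hfs0 i)]

variable [DecidableEq ι]

theorem measurePreserving_update [∀ i, SigmaFinite (μ i)] (j : ι) [IsProbabilityMeasure (μ j)] :
    MeasurePreserving (fun z : (∀ i, X i) × X j => Function.update z.1 j z.2)
      ((Measure.pi μ).prod (μ j)) (Measure.pi μ) := by
  refine ⟨measurable_update', (Measure.pi_eq fun s hs => ?_).symm⟩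
  rw [Measure.map_apply measurable_update' (MeasurableSet.univ_pi hs), preimage_update_univ_pi,
    Measure.prod_prod, Measure.pi_pi, ← mul_prod_erase univ _ (mem_univ j),
    ← mul_prod_erase univ (fun i => μ i (s i)) (mem_univ j), Function.update_self, measure_univ,
    one_mul, mul_comm]
  congr 1
  refine prod_congr rfl fun i hi => ?_
  rw [Function.update_of_ne (ne_of_mem_erase hi)]

variable {E : Type*} [NormedAddCommGroup E] [NormedSpace ℝ E]

theorem integral_integral_update [∀ i, SigmaFinite (μ i)] (j : ι) [IsProbabilityMeasure (μ j)]
    {g : (∀ i, X i) → E} (hg : Integrable g (Measure.pi μ)) :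
    ∫ τ, ∫ t, g (Function.update t j τ) ∂Measure.pi μ ∂μ j = ∫ t, g t ∂Measure.pi μ := by
  have hpres := measurePreserving_update (μ := μ) j
  rw [← integral_prod_symm (fun z => g (Function.update z.1 j z.2))
    (hpres.integrable_comp_of_integrable hg)]
  conv_rhs => rw [← hpres.map_eq]
  rw [integral_map hpres.aemeasurable (hpres.map_eq.symm ▸ hg.aestronglyMeasurable)]

theorem integral_eval_mul_eq_integral_mul_integral_update [∀ i, SigmaFinite (μ i)] (j : ι)
    [IsProbabilityMeasure (μ j)] {w : X j → ℝ} {q : (∀ i, X i) → ℝ}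
    (hwq : Integrable (fun t => w (t j) * q t) (Measure.pi μ)) :
    ∫ t, w (t j) * q t ∂Measure.pi μ =
      ∫ τ, w τ * ∫ t, q (Function.update t j τ) ∂Measure.pi μ ∂μ j := by
  rw [← integral_integral_update j hwq]
  simp only [Function.update_self, integral_const_mul]

theorem stronglyMeasurable_integral_update [∀ i, SigmaFinite (μ i)] (j : ι)
    {q : (∀ i, X i) → E} (hq : StronglyMeasurable q) :
    StronglyMeasurable fun τ => ∫ t, q (Function.update t j τ) ∂Measure.pi μ :=
  (hq.comp_measurable measurable_update').integral_prod_left'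

theorem norm_integral_update_le [∀ i, IsProbabilityMeasure (μ i)] {j : ι} {s : ∀ i, Set (X i)}
    (hs : ∀ i, ∀ᵐ y ∂μ i, y ∈ s i) {q : (∀ i, X i) → E} {C : ℝ}
    (hq : ∀ t ∈ Set.univ.pi s, ‖q t‖ ≤ C) {τ : X j} (hτ : τ ∈ s j) :
    ‖∫ t, q (Function.update t j τ) ∂Measure.pi μ‖ ≤ C := by
  have hbound : ∀ᵐ t ∂Measure.pi μ, ‖q (Function.update t j τ)‖ ≤ C := by
    filter_upwards [ae_pi_mem_univ_pi hs] with t ht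
    exact hq _ (Set.update_mem_pi_iff_of_mem ht |>.2 fun _ => hτ)
  simpa using norm_integral_le_of_norm_le_const hbound

end ProductMeasure

theorem intervalIntegral_primitive_mul_eq_integral_mul_tail {Q f : ℝ → ℝ} {a b : ℝ}
    (hQ : IntervalIntegrable Q volume a b) (hf : IntervalIntegrable f volume a b) :
    ∫ τ in a..b, (∫ s in a..τ, Q s) * f τ = ∫ s in a..b, Q s * ∫ τ in s..b, f τ := by
  have hparts := (hQ.absolutelyContinuousOnInterval_intervalIntegral
    Set.left_mem_uIcc).integral_mul_deriv_eq_deriv_mul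
      (hf.absolutelyContinuousOnInterval_intervalIntegral Set.right_mem_uIcc)
  have hleft : ∫ τ in a..b, (∫ s in a..τ, Q s) * deriv (fun τ => ∫ s in b..τ, f s) τ =
      ∫ τ in a..b, (∫ s in a..τ, Q s) * f τ := by
    refine intervalIntegral.integral_congr_ae ?_
    filter_upwards [hf.ae_hasDerivAt_integral] with τ hτ hmem
    rw [(hτ (Set.uIoc_subset_uIcc hmem) b Set.right_mem_uIcc).deriv]
  have hright : ∫ s in a..b, deriv (fun s => ∫ τ in a..s, Q τ) s * ∫ τ in b..s, f τ =
      ∫ s in a..b, -(Q s * ∫ τ in s..b, f τ) := by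
    refine intervalIntegral.integral_congr_ae ?_
    filter_upwards [hQ.ae_hasDerivAt_integral] with s hs hmem
    rw [(hs (Set.uIoc_subset_uIcc hmem) a Set.left_mem_uIcc).deriv,
      intervalIntegral.integral_symm s b, mul_neg]
  rw [hleft, hright] at hparts
  simpa using hparts

/-- The inverse hazard rate `(1 - F τ) / f τ` of the density `f` on an interval starting at `a`,
with `F τ = ∫ s in a..τ, f s`. -/
def inverseHazard (a : ℝ) (f : ℝ → ℝ) (τ : ℝ) : ℝ :=
  (1 - ∫ s in a..τ, f s) / f τ

/-- Myerson's virtual valuation `τ - (1 - F τ) / f τ` of a buyer of type `τ`. -/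
def virtualValue (a : ℝ) (f : ℝ → ℝ) (τ : ℝ) : ℝ :=
  τ - inverseHazard a f τ

/-- The law on `[a, b]` with Lebesgue density `f`: the distribution of one user's type. -/
def typeLaw (a b : ℝ) (f : ℝ → ℝ) : Measure ℝ :=
  (volume.restrict (Set.Icc a b)).withDensity fun t => ENNReal.ofReal (f t)

/-- `f` is a probability density on `[a, b]`, positive at every point of `[a, b]`. The condition
`integral_eq_one` contains integrability, the integral of a nonintegrable function being `0`. -/
structure IsPositiveDensity (a b : ℝ) (f : ℝ → ℝ) : Prop where
  pos : ∀ t ∈ Set.Icc a b, 0 < f t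
  integral_eq_one : ∫ t in Set.Icc a b, f t = 1

theorem ae_typeLaw_mem_Icc (a b : ℝ) (f : ℝ → ℝ) : ∀ᵐ t ∂typeLaw a b f, t ∈ Set.Icc a b :=
  (withDensity_absolutelyContinuous _ _).ae_le (ae_restrict_mem measurableSet_Icc)

namespace IsPositiveDensity

variable {a b : ℝ} {f : ℝ → ℝ} (hf : IsPositiveDensity a b f)
include hf

theorem integrableOn : IntegrableOn f (Set.Icc a b) :=
  .of_integral_ne_zero (hf.integral_eq_one ▸ one_ne_zero)

theorem ae_nonneg : 0 ≤ᵐ[volume.restrict (Set.Icc a b)] f :=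
  (ae_restrict_mem measurableSet_Icc).mono fun t ht => (hf.pos t ht).le

theorem le : a ≤ b := by
  by_contra hab
  simpa [Set.Icc_eq_empty hab] using hf.integral_eq_one

theorem isProbabilityMeasure_typeLaw : IsProbabilityMeasure (typeLaw a b f) := by
  constructor
  rw [typeLaw, withDensity_apply _ .univ, Measure.restrict_univ,
    ← ofReal_integral_eq_lintegral_ofReal hf.integrableOn hf.ae_nonneg, hf.integral_eq_one,
    ENNReal.ofReal_one]

theorem integral_typeLaw (g : ℝ → ℝ) :
    ∫ t, g t ∂typeLaw a b f = ∫ t in Set.Icc a b, g t * f t :=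
  integral_withDensity_ofReal hf.integrableOn.aemeasurable hf.ae_nonneg g

theorem integrable_typeLaw_iff {g : ℝ → ℝ} :
    Integrable g (typeLaw a b f) ↔ IntegrableOn (fun t => g t * f t) (Set.Icc a b) :=
  integrable_withDensity_ofReal_iff hf.integrableOn.aemeasurable hf.ae_nonneg

theorem integrable_typeLaw_of_continuousOn {g : ℝ → ℝ} (hg : ContinuousOn g (Set.Icc a b)) :
    Integrable g (typeLaw a b f) :=
  hf.integrable_typeLaw_iff.2 (hf.integrableOn.continuousOn_mul hg isCompact_Icc)

theorem one_sub_primitive_eq_tail {s : ℝ} (hs : s ∈ Set.Icc a b) :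
    1 - ∫ τ in a..s, f τ = ∫ τ in s..b, f τ := by
  have hint := hf.integrableOn
  rw [← Set.uIcc_of_le hf.le] at hint hs
  rw [← hf.integral_eq_one, integral_Icc_eq_integral_Ioc, ← intervalIntegral.integral_of_le hf.le,
    intervalIntegral.integral_interval_sub_left hint.intervalIntegrable
      (hint.mono_set (Set.uIcc_subset_uIcc_left hs)).intervalIntegrable]

variable {Q : ℝ → ℝ}

theorem inverseHazard_mul_mul_density {t : ℝ} (ht : t ∈ Set.Icc a b) :
    inverseHazard a f t * Q t * f t = Q t * ∫ τ in t..b, f τ := by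
  rw [inverseHazard, hf.one_sub_primitive_eq_tail ht]
  field_simp [(hf.pos t ht).ne']

theorem integrable_inverseHazard_mul (hQ : IntegrableOn Q (Set.Icc a b)) :
    Integrable (fun t => inverseHazard a f t * Q t) (typeLaw a b f) := by
  have htail : ContinuousOn (fun t => ∫ τ in t..b, f τ) (Set.Icc a b) := by
    have hint := hf.integrableOn
    rw [← Set.uIcc_of_le hf.le] at hint ⊢
    exact intervalIntegral.continuousOn_primitive_interval_left hint
  rw [hf.integrable_typeLaw_iff]
  exact (hQ.mul_continuousOn htail isCompact_Icc).congr_fun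
    (fun t ht => (hf.inverseHazard_mul_mul_density ht).symm) measurableSet_Icc

theorem integrable_inverseHazard : Integrable (inverseHazard a f) (typeLaw a b f) := by
  simpa using hf.integrable_inverseHazard_mul (Q := 1) (integrable_const _)

theorem integrable_virtualValue : Integrable (virtualValue a f) (typeLaw a b f) :=
  (hf.integrable_typeLaw_of_continuousOn continuousOn_id).sub hf.integrable_inverseHazard

theorem integrable_primitive (hQ : IntegrableOn Q (Set.Icc a b)) :
    Integrable (fun t => ∫ τ in a..t, Q τ) (typeLaw a b f) := by
  refine hf.integrable_typeLaw_of_continuousOn ?_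
  rw [← Set.uIcc_of_le hf.le] at hQ ⊢
  exact intervalIntegral.continuousOn_primitive_interval hQ

theorem integral_primitive_eq_integral_inverseHazard_mul (hQ : IntegrableOn Q (Set.Icc a b)) :
    ∫ t, (∫ τ in a..t, Q τ) ∂typeLaw a b f = ∫ t, inverseHazard a f t * Q t ∂typeLaw a b f := by
  have intervalIntegrable {g : ℝ → ℝ} (hg : IntegrableOn g (Set.Icc a b)) :
      IntervalIntegrable g volume a b :=
    (intervalIntegrable_iff_integrableOn_Icc_of_le hf.le).2 hg
  rw [hf.integral_typeLaw, hf.integral_typeLaw,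
    setIntegral_congr_fun measurableSet_Icc fun t => hf.inverseHazard_mul_mul_density,
    integral_Icc_eq_integral_Ioc, integral_Icc_eq_integral_Ioc,
    ← intervalIntegral.integral_of_le hf.le, ← intervalIntegral.integral_of_le hf.le]
  exact intervalIntegral_primitive_mul_eq_integral_mul_tail (intervalIntegrable hQ)
    (intervalIntegrable hf.integrableOn)

theorem integral_payment_of_envelope {P : ℝ → ℝ} {θ u : ℝ} (hQ : IntegrableOn Q (Set.Icc a b))
    (hQlaw : Integrable (fun t => t * Q t) (typeLaw a b f))
    (henv : ∀ t ∈ Set.Icc a b, θ * t * Q t - P t = u + θ * ∫ τ in a..t, Q τ) :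
    ∫ t, P t ∂typeLaw a b f = -u + θ * ∫ t, virtualValue a f t * Q t ∂typeLaw a b f := by
  have := hf.isProbabilityMeasure_typeLaw
  have hprim := hf.integrable_primitive hQ
  have hpay : ∀ᵐ t ∂typeLaw a b f, P t = -u + θ * (t * Q t - ∫ τ in a..t, Q τ) := by
    filter_upwards [ae_typeLaw_mem_Icc a b f] with t ht
    linear_combination -henv t ht
  have hdiff : Integrable (fun t => t * Q t - ∫ τ in a..t, Q τ) (typeLaw a b f) :=
    hQlaw.sub hprim
  calc ∫ t, P t ∂typeLaw a b f
    _ = -u + θ * (∫ t, t * Q t ∂typeLaw a b f - ∫ t, (∫ τ in a..t, Q τ) ∂typeLaw a b f) := by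
      rw [integral_congr_ae hpay, integral_add (integrable_const _) (hdiff.const_mul θ),
        integral_const_mul, integral_sub hQlaw hprim]
      simp
    _ = -u + θ * ∫ t, virtualValue a f t * Q t ∂typeLaw a b f := by
      rw [hf.integral_primitive_eq_integral_inverseHazard_mul hQ,
        ← integral_sub hQlaw (hf.integrable_inverseHazard_mul hQ)]
      simp only [virtualValue, sub_mul]

end IsPositiveDensity

/-- The joint law of the independent types of all users. -/
abbrev jointLaw {n : ℕ} (a abar : Fin n → ℝ) (f : Fin n → ℝ → ℝ) : Measure (Fin n → ℝ) :=
  Measure.pi fun j => typeLaw (a j) (abar j) (f j)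

/-- The interim expectation of `g` for user `j` of type `τ`: the other users' types are drawn from
their laws. As in `interimAlloc`, all types are drawn and the `j`-th one is then overwritten. -/
def interim {n : ℕ} (a abar : Fin n → ℝ) (f : Fin n → ℝ → ℝ) (j : Fin n)
    (g : (Fin n → ℝ) → ℝ) (τ : ℝ) : ℝ :=
  ∫ t, g (Function.update t j τ) ∂jointLaw a abar f

section JointLaw

variable {n : ℕ} {a abar : Fin n → ℝ} {f : Fin n → ℝ → ℝ}
  (hf : ∀ j, IsPositiveDensity (a j) (abar j) (f j))
include hf

theorem ae_jointLaw_mem_Tspace : ∀ᵐ t ∂jointLaw a abar f, t ∈ Tspace a abar := by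
  have (j : Fin n) := (hf j).isProbabilityMeasure_typeLaw
  exact ae_pi_mem_univ_pi fun j => ae_typeLaw_mem_Icc _ _ _

theorem jointLaw_eq_withDensity :
    jointLaw a abar f =
      (volume.restrict (Tspace a abar)).withDensity fun t => ENNReal.ofReal (jointDens f t) := by
  rw [Tspace, volume_pi, Measure.restrict_pi_pi]
  exact pi_withDensity_ofReal (fun j => (hf j).integrableOn) fun j => (hf j).ae_nonneg

theorem integrableOn_jointDens : IntegrableOn (jointDens f) (Tspace a abar) := by
  rw [IntegrableOn, Tspace, volume_pi, Measure.restrict_pi_pi]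
  exact Integrable.fintype_prod_dep fun j => (hf j).integrableOn

theorem ae_jointDens_nonneg : 0 ≤ᵐ[volume.restrict (Tspace a abar)] jointDens f := by
  rw [Tspace, volume_pi, Measure.restrict_pi_pi]
  exact ae_pi_prod_nonneg fun j => (hf j).ae_nonneg

theorem integral_jointLaw (g : (Fin n → ℝ) → ℝ) :
    ∫ t, g t ∂jointLaw a abar f = ∫ t in Tspace a abar, g t * jointDens f t := by
  rw [jointLaw_eq_withDensity hf]
  exact integral_withDensity_ofReal (integrableOn_jointDens hf).aemeasurable
    (ae_jointDens_nonneg hf) g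

theorem integrable_jointLaw_iff {g : (Fin n → ℝ) → ℝ} :
    Integrable g (jointLaw a abar f) ↔
      IntegrableOn (fun t => g t * jointDens f t) (Tspace a abar) := by
  rw [jointLaw_eq_withDensity hf]
  exact integrable_withDensity_ofReal_iff (integrableOn_jointDens hf).aemeasurable
    (ae_jointDens_nonneg hf)

theorem interimAlloc_eq_interim {m : ℕ} (S : Fin n → Finset (Fin m))
    (p : (Fin n → ℝ) → Fin m → ℝ) (j : Fin n) :
    interimAlloc a abar f S p j = interim a abar f j fun t => ∑ i ∈ S j, p t i :=
  funext fun _ => (integral_jointLaw hf _).symm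

theorem interimPay_eq_interim (x : (Fin n → ℝ) → Fin n → ℝ) (j : Fin n) :
    interimPay a abar f x j = interim a abar f j fun t => x t j :=
  funext fun _ => (integral_jointLaw hf _).symm

theorem integral_interim {g : (Fin n → ℝ) → ℝ} (hg : Integrable g (jointLaw a abar f))
    (j : Fin n) :
    ∫ τ, interim a abar f j g τ ∂typeLaw (a j) (abar j) (f j) = ∫ t, g t ∂jointLaw a abar f := by
  have (j : Fin n) := (hf j).isProbabilityMeasure_typeLaw
  exact integral_integral_update j hg

section BoundedAllocation

variable {q : (Fin n → ℝ) → ℝ} (hq : Measurable q) {C : ℝ}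
  (hqC : ∀ t ∈ Tspace a abar, ‖q t‖ ≤ C)

include hq in
theorem stronglyMeasurable_interim (j : Fin n) : StronglyMeasurable (interim a abar f j q) := by
  have (j : Fin n) := (hf j).isProbabilityMeasure_typeLaw
  exact stronglyMeasurable_integral_update j hq.stronglyMeasurable

include hqC in
theorem norm_interim_le {j : Fin n} {τ : ℝ} (hτ : τ ∈ Set.Icc (a j) (abar j)) :
    ‖interim a abar f j q τ‖ ≤ C := by
  have (j : Fin n) := (hf j).isProbabilityMeasure_typeLaw
  exact norm_integral_update_le (fun j => ae_typeLaw_mem_Icc _ _ _) hqC hτ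

include hq hqC

theorem integrableOn_interim (j : Fin n) :
    IntegrableOn (interim a abar f j q) (Set.Icc (a j) (abar j)) :=
  .of_bound measure_Icc_lt_top (stronglyMeasurable_interim hf hq j).aestronglyMeasurable C
    ((ae_restrict_mem measurableSet_Icc).mono fun _ => norm_interim_le hf hqC)

theorem integrable_id_mul_interim (j : Fin n) :
    Integrable (fun τ => τ * interim a abar f j q τ) (typeLaw (a j) (abar j) (f j)) :=
  ((hf j).integrable_typeLaw_of_continuousOn continuousOn_id).mul_bdd
    (stronglyMeasurable_interim hf hq j).aestronglyMeasurable
    ((ae_typeLaw_mem_Icc _ _ _).mono fun _ => norm_interim_le hf hqC)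

theorem integrable_jointLaw_of_bound : Integrable q (jointLaw a abar f) := by
  have (j : Fin n) := (hf j).isProbabilityMeasure_typeLaw
  exact .of_bound hq.aestronglyMeasurable C ((ae_jointLaw_mem_Tspace hf).mono hqC)

theorem integrable_virtualValue_mul (j : Fin n) :
    Integrable (fun t => virtualValue (a j) (f j) (t j) * q t) (jointLaw a abar f) := by
  have (j : Fin n) := (hf j).isProbabilityMeasure_typeLaw
  exact (integrable_comp_eval (hf j).integrable_virtualValue).mul_bdd hq.aestronglyMeasurable
    ((ae_jointLaw_mem_Tspace hf).mono hqC)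

theorem integral_virtualValue_mul_interim (j : Fin n) :
    ∫ τ, virtualValue (a j) (f j) τ * interim a abar f j q τ ∂typeLaw (a j) (abar j) (f j) =
      ∫ t, virtualValue (a j) (f j) (t j) * q t ∂jointLaw a abar f := by
  have (j : Fin n) := (hf j).isProbabilityMeasure_typeLaw
  exact (integral_eval_mul_eq_integral_mul_integral_update j
    (integrable_virtualValue_mul hf hq hqC j)).symm

theorem integral_payment_eq_integral_virtualValue_mul {y : (Fin n → ℝ) → ℝ} {θ u : ℝ} {j : Fin n}
    (hy : Integrable y (jointLaw a abar f))
    (henv : ∀ t ∈ Set.Icc (a j) (abar j),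
      θ * t * interim a abar f j q t - interim a abar f j y t =
        u + θ * ∫ τ in (a j)..t, interim a abar f j q τ) :
    ∫ t, y t ∂jointLaw a abar f =
      -u + θ * ∫ t, virtualValue (a j) (f j) (t j) * q t ∂jointLaw a abar f := by
  rw [← integral_interim hf hy j, ← integral_virtualValue_mul_interim hf hq hqC j]
  exact (hf j).integral_payment_of_envelope (integrableOn_interim hf hq hqC j)
    (integrable_id_mul_interim hf hq hqC j) henv

end BoundedAllocation

end JointLaw

section Revenue

variable {ι κ : Type*} [Fintype ι]

theorem sum_mul_card_filter_mem [Fintype κ] [DecidableEq κ] {R : Type*} [Semiring R]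
    (S : ι → Finset κ) (w : κ → R) :
    ∑ i, w i * (#{j | i ∈ S j} : R) = ∑ j, ∑ i ∈ S j, w i := by
  simp only [card_eq_sum_ones, Nat.cast_sum, Nat.cast_one, mul_sum, mul_one]
  exact sum_comm' (by simp)

variable {α : Type*} [MeasurableSpace α] {μ : Measure α} {v x q : ι → α → ℝ}

theorem integral_sum_sub_sub_mul_sum {cost : α → ℝ} (c : ℝ) (hx : ∀ j, Integrable (x j) μ)
    (hcost : Integrable cost μ) (hq : ∀ j, Integrable (q j) μ) :
    ∫ t, (∑ j, x j t - cost t - c * ∑ j, q j t) ∂μ =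
      ∑ j, (∫ t, x j t ∂μ - c * ∫ t, q j t ∂μ) - ∫ t, cost t ∂μ := by
  have hxsum := integrable_finsetSum univ fun j _ => hx j
  have hqsum := integrable_finsetSum univ fun j _ => hq j
  have hxcost : Integrable (fun t => ∑ j, x j t - cost t) μ := hxsum.sub hcost
  rw [integral_sub hxcost (hqsum.const_mul c), integral_sub hxsum hcost,
    integral_const_mul, integral_finsetSum univ fun j _ => hx j,
    integral_finsetSum univ fun j _ => hq j, sum_sub_distrib, mul_sum]
  ring

theorem mul_integral_sum_sub_div_mul {θ : ℝ} (hθ : θ ≠ 0) (c : ℝ)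
    (hvq : ∀ j, Integrable (fun t => v j t * q j t) μ) (hq : ∀ j, Integrable (q j) μ) :
    θ * ∫ t, ∑ j, (v j t - c / θ) * q j t ∂μ =
      ∑ j, (θ * ∫ t, v j t * q j t ∂μ - c * ∫ t, q j t ∂μ) := by
  have hterm (j : ι) : Integrable (fun t => v j t * q j t - c / θ * q j t) μ :=
    (hvq j).sub ((hq j).const_mul _)
  simp only [sub_mul]
  rw [integral_finsetSum univ fun j _ => hterm j, mul_sum]
  refine sum_congr rfl fun j _ => ?_
  rw [integral_sub (hvq j) ((hq j).const_mul _), integral_const_mul]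
  field_simp

end Revenue

theorem norm_le_one_of_nonneg_of_sum_le_one {ι : Type*} [Fintype ι] {w : ι → ℝ}
    (hw : ∀ i, 0 ≤ w i) (hsum : ∑ i, w i ≤ 1) (i : ι) : ‖w i‖ ≤ 1 := by
  rw [Real.norm_of_nonneg (hw i)]
  exact (single_le_sum (fun i _ => hw i) (mem_univ i)).trans hsum

theorem stmt_7_general {n m : ℕ} (θ hval : ℝ) (hθ : θ ≠ 0) (r : Fin m → ℝ) (a abar : Fin n → ℝ)
    (f : Fin n → ℝ → ℝ) (hf : ∀ j, IsPositiveDensity (a j) (abar j) (f j))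
    (S : Fin n → Finset (Fin m)) (p : (Fin n → ℝ) → Fin m → ℝ) (hpmeas : Measurable p)
    (C : ℝ) (hpC : ∀ t ∈ Tspace a abar, ∀ i, ‖p t i‖ ≤ C)
    (x : (Fin n → ℝ) → Fin n → ℝ)
    (hxint : ∀ j, IntegrableOn (fun t => x t j * jointDens f t) (Tspace a abar))
    (henv : ∀ j, ∀ t ∈ Set.Icc (a j) (abar j),
      vtld θ a abar f S p x j t =
        vtld θ a abar f S p x j (a j) + θ * ∫ τ in (a j)..t, interimAlloc a abar f S p j τ) :
    ∫ t in Tspace a abar,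
        (∑ j, x t j - ∑ i, p t i * r i
          - ∑ i, p t i * ((Finset.univ.filter fun j => i ∈ S j).card : ℝ) * hval)
          * jointDens f t
      = -(∑ j, vtld θ a abar f S p x j (a j))
        + θ * (∫ t in Tspace a abar,
            (∑ j, (t j - (1 - ∫ τ in (a j)..(t j), f j τ) / f j (t j) - hval / θ)
              * (∑ i ∈ S j, p t i)) * jointDens f t)
        - ∫ t in Tspace a abar, (∑ i, p t i * r i) * jointDens f t := by
  have hp (i : Fin m) : Integrable (fun t => p t i) (jointLaw a abar f) :=
    integrable_jointLaw_of_bound hf hpmeas.eval fun t ht => hpC t ht i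
  have hq (j : Fin n) : Measurable fun t => ∑ i ∈ S j, p t i :=
    Finset.measurable_sum _ fun i _ => hpmeas.eval
  have hqC (j : Fin n) (t) (ht : t ∈ Tspace a abar) : ‖∑ i ∈ S j, p t i‖ ≤ #(S j) * C := by
    simpa using norm_sum_le_of_le _ fun i _ => hpC t ht i
  have hqint (j : Fin n) := integrable_jointLaw_of_bound hf (hq j) (hqC j)
  have hx (j : Fin n) : Integrable (fun t => x t j) (jointLaw a abar f) :=
    (integrable_jointLaw_iff hf).2 (hxint j)
  have hpay (j : Fin n) := integral_payment_eq_integral_virtualValue_mul hf (hq j) (hqC j) (hx j)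
    (u := vtld θ a abar f S p x j (a j)) (θ := θ) <| by
      rw [← interimAlloc_eq_interim hf, ← interimPay_eq_interim hf]
      exact henv j
  have hvirtual := mul_integral_sum_sub_div_mul hθ hval
    (fun j => integrable_virtualValue_mul hf (hq j) (hqC j) j) hqint
  have hdelivery (t) : ∑ i, p t i * (#{j | i ∈ S j} : ℝ) * hval = hval * ∑ j, ∑ i ∈ S j, p t i := by
    rw [← sum_mul, sum_mul_card_filter_mem, mul_comm]
  simp only [virtualValue, inverseHazard] at hpay hvirtual
  simp only [← integral_jointLaw hf, hdelivery]
  rw [integral_sum_sub_sub_mul_sum hval hx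
    (integrable_finsetSum univ fun i _ => (hp i).mul_const (r i)) hqint, hvirtual]
  simp only [hpay, add_sub_assoc, sum_add_distrib, sum_neg_distrib]

/-- Lemma 2: for a feasible mechanism satisfying conditions (i)–(ii) of Lemma 1,
the expected revenue

  ER = ∫_T [ ∑_j x_j(t) − ∑_i p_i(t) r_i − ∑_i p_i(t) |Ω_i| h(θ) ] f(t) dt

can be rewritten as
  −∑_j ṽ_j(a_j)
  + θ ∫_T { ∑_j [ t_j − (1 − F_j(t_j))/f_j(t_j) − h(θ)/θ ] (∑_{i∈S_j} p_i(t)) } f(t) dt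
  − ∫_T [ ∑_i p_i(t) r_i ] f(t) dt. -/
theorem stmt_7 {n m : ℕ} (θ hval : ℝ) (hθ : 0 < θ) (hh : 0 ≤ hval)
    (r : Fin m → ℝ)
    (a abar : Fin n → ℝ) (hab : ∀ j, a j < abar j)
    (f : Fin n → ℝ → ℝ)
    (hfmeas : ∀ j, Measurable (f j))
    (hfpos : ∀ j, ∀ t ∈ Set.Icc (a j) (abar j), 0 < f j t)
    (hfprob : ∀ j, ∫ t in Set.Icc (a j) (abar j), f j t = 1)
    (S : Fin n → Finset (Fin m))
    (p : (Fin n → ℝ) → Fin m → ℝ) (hpmeas : Measurable p)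
    (hFF : ∀ t ∈ Tspace a abar, (∀ i, 0 ≤ p t i) ∧ ∑ i, p t i ≤ 1)
    (x : (Fin n → ℝ) → Fin n → ℝ) (hxmeas : Measurable x)
    (hxint : ∀ j, IntegrableOn (fun t => x t j * jointDens f t) (Tspace a abar))
    (hmono : ∀ j, MonotoneOn (interimAlloc a abar f S p j) (Set.Icc (a j) (abar j)))
    (henv : ∀ j, ∀ t ∈ Set.Icc (a j) (abar j),
        vtld θ a abar f S p x j t
          = vtld θ a abar f S p x j (a j)
            + θ * ∫ τ in (a j)..t, interimAlloc a abar f S p j τ) :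
    ∫ t in Tspace a abar,
        (∑ j, x t j - ∑ i, p t i * r i
          - ∑ i, p t i * ((Finset.univ.filter fun j => i ∈ S j).card : ℝ) * hval)
          * jointDens f t
      = -(∑ j, vtld θ a abar f S p x j (a j))
        + θ * (∫ t in Tspace a abar,
            (∑ j, (t j - (1 - ∫ τ in (a j)..(t j), f j τ) / f j (t j) - hval / θ)
              * (∑ i ∈ S j, p t i)) * jointDens f t)
        - ∫ t in Tspace a abar, (∑ i, p t i * r i) * jointDens f t :=
  stmt_7_general θ hval hθ.ne' r a abar f (fun j => ⟨hfpos j, hfprob j⟩) S p hpmeas 1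
    (fun t ht => norm_le_one_of_nonneg_of_sum_le_one (hFF t ht).1 (hFF t ht).2) x hxint henv

end Caching
end

section
/- Suppose each c_s is strictly increasing on T_s. For any t ∈ T and any j ∈ {1,…,n}, if ∑_{i∈S_j} p*_i(t) = 0, then x*_j(t) = 0, where x*_j(t) = θ t_j ∑_{i∈S_j} p*_i(t) − θ ∫_{a_j}^{t_j} ∑_{i∈S_j} p*_i(τ, t_{−j}) dτ. (Proposition 4: a user whose interesting contents are not cached pays nothing.) -/
open Finset MeasureTheory

/-- The virtual welfare of content i at type profile t:
W_i(t) = ∑_{s ∈ Ω_i} (θ c_s(t_s) − h(θ)) − r_i, where Ω_i = {j : i ∈ S_j}. -/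
def virtWelfare {n m : ℕ} (θ hval : ℝ) (r : Fin m → ℝ)
    (S : Fin n → Finset (Fin m)) (c : Fin n → ℝ → ℝ)
    (i : Fin m) (t : Fin n → ℝ) : ℝ :=
  (∑ s ∈ Finset.univ.filter fun j => i ∈ S j, (θ * c s (t s) - hval)) - r i

/-!
Lowering the type of user `j` from `t j` to `τ` strictly lowers the virtual welfare of every content
in `S j` and leaves all others unchanged. If a content of `S j` were cached at the lower type, it
would therefore strictly beat every content outside `S j` at `t j`, and some content of `S j` would be
cached there too. Hence if nothing in `S j` is cached at `t`, the integrand of the payment vanishes.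
-/

section OptimalAllocation

variable {ι α R : Type*} [LinearOrder α] [Zero α] [AddCommMonoidWithOne R]

/-- `p` is an optimal allocation for the welfares `w`: it is the indicator of a single maximizer
of `w` when some welfare is positive, and zero otherwise. How ties are broken is left open. -/
structure IsOptimalAllocation (w : ι → α) (p : ι → R) : Prop where
  exists_argmax : (∃ i, 0 < w i) → ∃ k, (∀ i, w i ≤ w k) ∧ p k = 1 ∧ ∀ i, i ≠ k → p i = 0
  eq_zero : (∀ i, w i ≤ 0) → ∀ i, p i = 0

namespace IsOptimalAllocation

variable {w w' : ι → α} {p p' : ι → R} {A : Finset ι}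

theorem exists_argmax_mem_of_sum_ne_zero (hp : IsOptimalAllocation w p)
    (hA : ∑ i ∈ A, p i ≠ 0) : ∃ k ∈ A, 0 < w k ∧ ∀ i, w i ≤ w k := by
  have hpos : ∃ i, 0 < w i := by
    by_contra! hnonpos
    exact hA (Finset.sum_eq_zero fun i _ => hp.eq_zero hnonpos i)
  obtain ⟨k, hmax, -, hp_ne⟩ := hp.exists_argmax hpos
  obtain ⟨i, hi⟩ := hpos
  have hk : k ∈ A := by
    by_contra hk
    exact hA (Finset.sum_eq_zero fun i hiA => hp_ne i (ne_of_mem_of_not_mem hiA hk))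
  exact ⟨k, hk, hi.trans_le (hmax i), hmax⟩

theorem sum_eq_one_of_forall_notMem_lt (hp : IsOptimalAllocation w p) {k : ι}
    (hpos : 0 < w k) (hlt : ∀ i ∉ A, w i < w k) : ∑ i ∈ A, p i = 1 := by
  obtain ⟨l, hmax, hpl, hp_ne⟩ := hp.exists_argmax ⟨k, hpos⟩
  have hl : l ∈ A := by
    by_contra hl
    exact (hlt l hl).not_ge (hmax k)
  rw [Finset.sum_eq_single_of_mem l hl fun i _ => hp_ne i, hpl]

theorem sum_eq_zero_of_welfare_lt [NeZero (1 : R)] (hp : IsOptimalAllocation w p)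
    (hp' : IsOptimalAllocation w' p') (hmem : ∀ i ∈ A, w i < w' i) (hnotMem : ∀ i ∉ A, w' i ≤ w i)
    (hzero : ∑ i ∈ A, p' i = 0) : ∑ i ∈ A, p i = 0 := by
  by_contra hne
  obtain ⟨k, hk, hpos, hmax⟩ := hp.exists_argmax_mem_of_sum_ne_zero hne
  have hlt : ∀ i ∉ A, w' i < w' k := fun i hi =>
    calc w' i ≤ w i := hnotMem i hi
      _ ≤ w k := hmax i
      _ < w' k := hmem k hk
  have hone := hp'.sum_eq_one_of_forall_notMem_lt (hpos.trans (hmem k hk)) hlt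
  exact one_ne_zero (hone.symm.trans hzero)

end IsOptimalAllocation

end OptimalAllocation

section VirtualWelfare

variable {n m : ℕ} {θ hval : ℝ} {r : Fin m → ℝ} {S : Fin n → Finset (Fin m)}
  {c : Fin n → ℝ → ℝ} {t : Fin n → ℝ} {j : Fin n} {τ : ℝ} {i : Fin m}

theorem virtWelfare_update_of_notMem (hi : i ∉ S j) :
    virtWelfare θ hval r S c i (Function.update t j τ) = virtWelfare θ hval r S c i t := by
  unfold virtWelfare
  congr 1
  refine Finset.sum_congr rfl fun s hs => ?_
  have hsj : s ≠ j := by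
    rintro rfl
    exact hi (Finset.mem_filter.mp hs).2
  rw [Function.update_of_ne hsj]

theorem virtWelfare_update_lt_of_mem (hθ : 0 < θ) (hc : c j τ < c j (t j)) (hi : i ∈ S j) :
    virtWelfare θ hval r S c i (Function.update t j τ) < virtWelfare θ hval r S c i t := by
  have hterm : θ * c j (Function.update t j τ j) - hval < θ * c j (t j) - hval := by
    rw [Function.update_self]
    gcongr
  unfold virtWelfare
  refine sub_lt_sub_right (Finset.sum_lt_sum (fun s _ => ?_) ⟨j, by simp [hi], hterm⟩) _
  obtain rfl | hsj := eq_or_ne s j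
  · exact hterm.le
  · rw [Function.update_of_ne hsj]

theorem sum_allocation_update_eq_zero {R : Type*} [AddCommMonoidWithOne R] [NeZero (1 : R)]
    {p p' : Fin m → R} (hθ : 0 < θ) (hc : c j τ < c j (t j))
    (hp : IsOptimalAllocation (virtWelfare θ hval r S c · t) p)
    (hp' : IsOptimalAllocation (virtWelfare θ hval r S c · (Function.update t j τ)) p')
    (hzero : ∑ i ∈ S j, p i = 0) : ∑ i ∈ S j, p' i = 0 :=
  hp'.sum_eq_zero_of_welfare_lt hp (fun _ hi => virtWelfare_update_lt_of_mem hθ hc hi)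
    (fun _ hi => (virtWelfare_update_of_notMem hi).ge) hzero

end VirtualWelfare

theorem stmt_14_general {n m : ℕ} {θ hval : ℝ} (hθ : 0 < θ) {r : Fin m → ℝ}
    {S : Fin n → Finset (Fin m)} {c : Fin n → ℝ → ℝ} {T : Fin n → Set ℝ}
    {p : (Fin n → ℝ) → Fin m → ℝ}
    (hp : ∀ t ∈ Set.univ.pi T, IsOptimalAllocation (virtWelfare θ hval r S c · t) (p t))
    {t : Fin n → ℝ} (ht : t ∈ Set.univ.pi T) {j : Fin n} (hc : StrictMonoOn (c j) (T j))
    {a : ℝ} (ha : a ≤ t j) (hT : Set.Icc a (t j) ⊆ T j) (hzero : ∑ i ∈ S j, p t i = 0) :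
    θ * t j * (∑ i ∈ S j, p t i)
      - θ * ∫ τ in a..(t j), ∑ i ∈ S j, p (Function.update t j τ) i = 0 := by
  have hintegrand : Set.EqOn (fun τ => ∑ i ∈ S j, p (Function.update t j τ) i) 0
      (Set.uIcc a (t j)) := by
    rw [Set.uIcc_of_le ha]
    intro τ hτ
    obtain rfl | hlt := hτ.2.eq_or_lt
    · simpa only [Function.update_eq_self, Pi.zero_apply] using hzero
    · have hupdate : Function.update t j τ ∈ Set.univ.pi T :=
        (Set.update_mem_pi_iff_of_mem ht).2 fun _ => hT hτ
      exact sum_allocation_update_eq_zero hθ (hc (hT hτ) (ht j trivial) hlt) (hp t ht)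
        (hp _ hupdate) hzero
  rw [intervalIntegral.integral_congr hintegrand, hzero]
  simp

/-- Proposition 4: in the optimal mechanism, a user whose interesting contents
are not cached pays nothing: if ∑_{i∈S_j} p*_i(t) = 0 then
x*_j(t) = θ t_j ∑_{i∈S_j} p*_i(t) − θ ∫_{a_j}^{t_j} ∑_{i∈S_j} p*_i(τ, t_{−j}) dτ = 0.
Here p* is the virtual-welfare-maximizing allocation and each c_s is strictly
increasing. -/
theorem stmt_14 {n m : ℕ} (θ hval : ℝ) (hθ : 0 < θ) (hh : 0 ≤ hval)
    (r : Fin m → ℝ) (a abar : Fin n → ℝ) (hab : ∀ s, a s < abar s)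
    (S : Fin n → Finset (Fin m))
    (c : Fin n → ℝ → ℝ)
    (hcmono : ∀ s, StrictMonoOn (c s) (Set.Icc (a s) (abar s)))
    (pstar : (Fin n → ℝ) → Fin m → ℝ)
    (hp1 : ∀ t : Fin n → ℝ, (∀ s, t s ∈ Set.Icc (a s) (abar s)) →
        (∃ i, 0 < virtWelfare θ hval r S c i t) →
        ∃ k, (∀ i, virtWelfare θ hval r S c i t ≤ virtWelfare θ hval r S c k t) ∧
          pstar t k = 1 ∧ ∀ i, i ≠ k → pstar t i = 0)
    (hp2 : ∀ t : Fin n → ℝ, (∀ s, t s ∈ Set.Icc (a s) (abar s)) →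
        (∀ i, virtWelfare θ hval r S c i t ≤ 0) → ∀ i, pstar t i = 0)
    (t : Fin n → ℝ) (htT : ∀ s, t s ∈ Set.Icc (a s) (abar s)) (j : Fin n)
    (hzero : (∑ i ∈ S j, pstar t i) = 0) :
    θ * t j * (∑ i ∈ S j, pstar t i)
      - θ * ∫ τ in (a j)..(t j), ∑ i ∈ S j, pstar (Function.update t j τ) i
      = 0 := by
  exact stmt_14_general (T := fun s => Set.Icc (a s) (abar s)) hθ
    (fun u hu => ⟨hp1 u fun s => hu s trivial, hp2 u fun s => hu s trivial⟩) (fun s _ => htT s)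
    (hcmono j) (htT j).1 (Set.Icc_subset_Icc_right (htT j).2) hzero
end
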